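/- Let d ≥ 1 be an integer and let P and Q be (α,C)-controlled probability measures on (0,1)^d for some C > 1 and 0 < α < 1. Then there exists a constant K > 0, depending only on d, C and α, such that for every h > 0 with 1/h a positive integer, W₂²(P, Q) ≤ W₂²(G_h # P, G_h # Q) + K·h^{1+α}. -/

import Mathlib

open MeasureTheory
open scoped ENNReal RealInnerProductSpace

noncomputable section

abbrev Euc (d : ℕ) := EuclideanSpace ℝ (Fin d)

/-- The open unit cube `(0,1)^d`. -/
def unitCube (d : ℕ) : Set (Euc d) := {x | ∀ i, x i ∈ Set.Ioo (0 : ℝ) 1}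

/-- `G_h` : map each point to the center of the axis-aligned grid cell
(of side length `h`) containing it. -/
def gridSnap (d : ℕ) (h : ℝ) (x : Euc d) : Euc d :=
  (EuclideanSpace.equiv (Fin d) ℝ).symm fun i => h * ⌊x i / h⌋ + h / 2

/-- Couplings of two Borel (probability) measures: probability measures on
the product with the prescribed marginals. -/
def Couplings {d : ℕ} (P Q : Measure (Euc d)) : Set (Measure (Euc d × Euc d)) :=
  {γ | IsProbabilityMeasure γ ∧ γ.map Prod.fst = P ∧ γ.map Prod.snd = Q}

/-- Squared 2-Wasserstein distance. -/
def W2sq {d : ℕ} (P Q : Measure (Euc d)) : ℝ :=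
  sInf {r | ∃ γ ∈ Couplings P Q, r = ∫ p, ‖p.1 - p.2‖ ^ 2 ∂γ}

/-- 2-Wasserstein distance. -/
def W2 {d : ℕ} (P Q : Measure (Euc d)) : ℝ := Real.sqrt (W2sq P Q)

/-- `P` and `Q` are `(α, C)`-controlled probability measures on `(0,1)^d`:
they possess densities `μ, ν` w.r.t. Lebesgue measure on `(0,1)^d` whose
`α`-Hölder seminorms sum to at most `C`, and which are bounded between
`C⁻¹` and `C`. -/
def IsControlled (d : ℕ) (α C : ℝ) (P Q : Measure (Euc d)) : Prop :=
  ∃ μ ν : Euc d → ℝ,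
    P = (volume.restrict (unitCube d)).withDensity (fun x => ENNReal.ofReal (μ x)) ∧
    Q = (volume.restrict (unitCube d)).withDensity (fun x => ENNReal.ofReal (ν x)) ∧
    (∃ Cμ Cν : ℝ, 0 ≤ Cμ ∧ 0 ≤ Cν ∧ Cμ + Cν ≤ C ∧
      (∀ x ∈ unitCube d, ∀ y ∈ unitCube d, |μ x - μ y| ≤ Cμ * ‖x - y‖ ^ α) ∧
      (∀ x ∈ unitCube d, ∀ y ∈ unitCube d, |ν x - ν y| ≤ Cν * ‖x - y‖ ^ α)) ∧
    (∀ x ∈ unitCube d, C⁻¹ ≤ μ x ∧ μ x ≤ C) ∧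
    (∀ x ∈ unitCube d, C⁻¹ ≤ ν x ∧ ν x ≤ C)

/-! Disintegrate `P` and `Q` along the cells of the grid: the conditional laws lift a coupling of
`G_h # P` and `G_h # Q` to a coupling of `P` and `Q` whose points `x`, `y` are independent given
their cell centers `u`, `v`. Expand `‖x - y‖²` around `u - v`. The quadratic term is at most
`(2 r)²`, where `r = √d h / 2` bounds the distance from a point of a cell to its center, and by
independence the linear term only sees the conditional means of `x - u` and `y - v`. A constant
density has no such drift, by symmetry of the cell, so for a density with Hölder constant `C` the
integral of `x - u` over a cell has norm at most `C r ^ (1 + α)` times the volume of the cell. These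
volumes sum to one, and the linear term is of order `h ^ (1 + α)`. -/

open ProbabilityTheory Set
open scoped NNReal

section Coupling

variable {d : ℕ} {P Q : Measure (Euc d)}

lemma W2sq_le_integral {γ : Measure (Euc d × Euc d)} (hγ : γ ∈ Couplings P Q) :
    W2sq P Q ≤ ∫ p, ‖p.1 - p.2‖ ^ 2 ∂γ :=
  csInf_le ⟨0, by rintro _ ⟨_, _, rfl⟩; positivity⟩ ⟨γ, hγ, rfl⟩

lemma le_W2sq [IsProbabilityMeasure P] [IsProbabilityMeasure Q] {c : ℝ}
    (h : ∀ γ ∈ Couplings P Q, c ≤ ∫ p, ‖p.1 - p.2‖ ^ 2 ∂γ) : c ≤ W2sq P Q :=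
  le_csInf ⟨_, P.prod Q, ⟨inferInstance, by simp, by simp⟩, rfl⟩ <| by
    rintro _ ⟨γ, hγ, rfl⟩
    exact h γ hγ

lemma parallelComp_comp_mem_couplings (κ η : Kernel (Euc d) (Euc d)) [IsMarkovKernel κ]
    [IsMarkovKernel η] {π : Measure (Euc d × Euc d)} (hπ : π ∈ Couplings P Q) :
    (κ ∥ₖ η) ∘ₘ π ∈ Couplings (κ ∘ₘ P) (η ∘ₘ Q) := by
  obtain ⟨_, rfl, rfl⟩ := hπ
  have hfst : (κ ∥ₖ η).map Prod.fst = κ.comap Prod.fst measurable_fst := by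
    ext z : 1
    simp [Kernel.map_apply _ measurable_fst, Kernel.parallelComp_apply]
  have hsnd : (κ ∥ₖ η).map Prod.snd = η.comap Prod.snd measurable_snd := by
    ext z : 1
    simp [Kernel.map_apply _ measurable_snd, Kernel.parallelComp_apply]
  refine ⟨inferInstance, ?_, ?_⟩
  · rw [Measure.map_comp _ _ measurable_fst, hfst, ← Kernel.comp_deterministic_eq_comap,
      ← Measure.comp_assoc, Measure.deterministic_comp_eq_map]
  · rw [Measure.map_comp _ _ measurable_snd, hsnd, ← Kernel.comp_deterministic_eq_comap,
      ← Measure.comp_assoc, Measure.deterministic_comp_eq_map]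

end Coupling

section Drift

variable {E : Type*} [NormedAddCommGroup E] [MeasurableSpace E]

section NormedSpace

variable [NormedSpace ℝ E]

/-- The drift of a Markov kernel `κ` at `u`: the mean displacement of one step of `κ` from `u`. -/
def drift (κ : Kernel E E) (u : E) : E := ∫ x, (x - u) ∂κ u

lemma norm_drift_le {κ : Kernel E E} [IsMarkovKernel κ] {u : E} {r : ℝ}
    (h : ∀ᵐ x ∂κ u, ‖x - u‖ ≤ r) : ‖drift κ u‖ ≤ r := by
  simpa [drift] using norm_integral_le_of_norm_le_const h

variable [SecondCountableTopology E] [BorelSpace E]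

lemma stronglyMeasurable_drift (κ : Kernel E E) [IsSFiniteKernel κ] :
    StronglyMeasurable (drift κ) :=
  StronglyMeasurable.integral_kernel_prod_right' (f := fun z : E × E => z.2 - z.1) (by fun_prop)

lemma integrable_norm_drift {κ : Kernel E E} [IsMarkovKernel κ] {μ : Measure E} [IsFiniteMeasure μ]
    {r : ℝ} (h : ∀ᵐ u ∂μ, ∀ᵐ x ∂κ u, ‖x - u‖ ≤ r) : Integrable (fun u => ‖drift κ u‖) μ := by
  refine .of_bound (stronglyMeasurable_drift κ).norm.aestronglyMeasurable r ?_
  filter_upwards [h] with u hu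
  simpa using norm_drift_le hu

end NormedSpace

variable [SecondCountableTopology E] [BorelSpace E]

lemma integrable_parallelComp_norm_sub_sq {κ η : Kernel E E} [IsMarkovKernel κ]
    [IsMarkovKernel η] {π : Measure (E × E)} [IsFiniteMeasure π] {r R : ℝ}
    (hκ : ∀ᵐ z ∂π, ∀ᵐ x ∂κ z.1, ‖x - z.1‖ ≤ r) (hη : ∀ᵐ z ∂π, ∀ᵐ y ∂η z.2, ‖y - z.2‖ ≤ r)
    (hR : ∀ᵐ z ∂π, ‖z.1 - z.2‖ ≤ R) :
    Integrable (fun p : E × E => ‖p.1 - p.2‖ ^ 2) ((κ ∥ₖ η) ∘ₘ π) := by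
  refine .of_bound (by fun_prop) ((R + (r + r)) ^ 2)
    (Measure.ae_comp_of_ae_ae (measurableSet_le (by fun_prop) measurable_const) ?_)
  filter_upwards [hκ, hη, hR] with z hz₁ hz₂ hz
  rw [Kernel.parallelComp_apply]
  filter_upwards [Measure.quasiMeasurePreserving_fst.ae hz₁,
    Measure.quasiMeasurePreserving_snd.ae hz₂] with p hp₁ hp₂
  have hsplit : p.1 - p.2 = (z.1 - z.2) + ((p.1 - z.1) - (p.2 - z.2)) := by abel
  rw [norm_pow, norm_norm, hsplit]
  gcongr
  exact (norm_add_le _ _).trans (add_le_add hz ((norm_sub_le _ _).trans (add_le_add hp₁ hp₂)))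

lemma integral_comp_measure {α β F : Type*} [MeasurableSpace α] [MeasurableSpace β]
    [NormedAddCommGroup F] [NormedSpace ℝ F] {μ : Measure α} {κ : Kernel α β} {f : β → F}
    (hf : Integrable f (κ ∘ₘ μ)) : ∫ y, f y ∂(κ ∘ₘ μ) = ∫ x, ∫ y, f y ∂κ x ∂μ := by
  rw [Measure.comp_eq_comp_const_apply] at hf ⊢
  rw [Kernel.integral_comp hf, Kernel.const_apply]

variable [InnerProductSpace ℝ E] [CompleteSpace E]

lemma integral_prod_norm_sub_sq_le {p q : Measure E} [IsProbabilityMeasure p]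
    [IsProbabilityMeasure q] {a b : E} {r : ℝ} (hp : ∀ᵐ x ∂p, ‖x - a‖ ≤ r)
    (hq : ∀ᵐ y ∂q, ‖y - b‖ ≤ r) :
    ∫ z, ‖z.1 - z.2‖ ^ 2 ∂(p.prod q) ≤ ‖a - b‖ ^ 2 +
      2 * ‖a - b‖ * (‖∫ x, (x - a) ∂p‖ + ‖∫ y, (y - b) ∂q‖) + (r + r) ^ 2 := by
  have hfst : Integrable (fun x => x - a) p := .of_bound (by fun_prop) r hp
  have hsnd : Integrable (fun y => y - b) q := .of_bound (by fun_prop) r hq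
  have hdev : Integrable (fun z : E × E => (z.1 - a) - (z.2 - b)) (p.prod q) :=
    (hfst.comp_fst q).sub (hsnd.comp_snd p)
  have hlin : Integrable (fun z : E × E => 2 * inner ℝ (a - b) ((z.1 - a) - (z.2 - b)))
      (p.prod q) := (hdev.const_inner _).const_mul 2
  have hsum : Integrable (fun z : E × E => ‖a - b‖ ^ 2 +
      2 * inner ℝ (a - b) ((z.1 - a) - (z.2 - b))) (p.prod q) := (integrable_const _).add hlin
  have hdev_le : ∀ᵐ z ∂p.prod q, ‖(z.1 - a) - (z.2 - b)‖ ^ 2 ≤ (r + r) ^ 2 := by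
    filter_upwards [Measure.quasiMeasurePreserving_fst.ae hp,
      Measure.quasiMeasurePreserving_snd.ae hq] with z hz₁ hz₂
    gcongr
    exact (norm_sub_le _ _).trans (add_le_add hz₁ hz₂)
  have hmean : ∫ z, ((z.1 - a) - (z.2 - b)) ∂(p.prod q) =
      ∫ x, (x - a) ∂p - ∫ y, (y - b) ∂q := by
    rw [integral_sub (hfst.comp_fst q) (hsnd.comp_snd p), integral_fun_fst (fun x => x - a),
      integral_fun_snd (fun y => y - b)]
    simp
  calc ∫ z, ‖z.1 - z.2‖ ^ 2 ∂(p.prod q)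
    _ ≤ ∫ z, (‖a - b‖ ^ 2 + 2 * inner ℝ (a - b) ((z.1 - a) - (z.2 - b)) + (r + r) ^ 2)
          ∂(p.prod q) := by
        refine integral_mono_of_nonneg (.of_forall fun z => by positivity)
          (hsum.add (integrable_const _)) ?_
        filter_upwards [hdev_le] with z hz
        have hsplit : z.1 - z.2 = (a - b) + ((z.1 - a) - (z.2 - b)) := by abel
        rw [hsplit, norm_add_sq_real]
        gcongr
    _ = ‖a - b‖ ^ 2 + 2 * inner ℝ (a - b) (∫ x, (x - a) ∂p - ∫ y, (y - b) ∂q) +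
          (r + r) ^ 2 := by
        rw [integral_add hsum (integrable_const _),
          integral_add (integrable_const _) hlin, integral_const_mul, integral_inner hdev, hmean]
        simp
    _ ≤ _ := by
        rw [mul_assoc 2]
        gcongr
        exact (real_inner_le_norm _ _).trans (by gcongr; exact norm_sub_le _ _)

lemma integral_parallelComp_norm_sub_sq_le {κ η : Kernel E E} [IsMarkovKernel κ]
    [IsMarkovKernel η] {π : Measure (E × E)} [IsProbabilityMeasure π] {r R : ℝ}
    (hκ : ∀ᵐ u ∂π.map Prod.fst, ∀ᵐ x ∂κ u, ‖x - u‖ ≤ r)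
    (hη : ∀ᵐ v ∂π.map Prod.snd, ∀ᵐ y ∂η v, ‖y - v‖ ≤ r) (hR : ∀ᵐ z ∂π, ‖z.1 - z.2‖ ≤ R) :
    ∫ p, ‖p.1 - p.2‖ ^ 2 ∂((κ ∥ₖ η) ∘ₘ π) ≤ ∫ z, ‖z.1 - z.2‖ ^ 2 ∂π +
      2 * R * (∫ u, ‖drift κ u‖ ∂π.map Prod.fst + ∫ v, ‖drift η v‖ ∂π.map Prod.snd) +
      (r + r) ^ 2 := by
  have hdriftκ : Integrable (fun z : E × E => ‖drift κ z.1‖) π :=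
    (integrable_norm_drift hκ).comp_measurable measurable_fst
  have hdriftη : Integrable (fun z : E × E => ‖drift η z.2‖) π :=
    (integrable_norm_drift hη).comp_measurable measurable_snd
  replace hκ := ae_of_ae_map measurable_fst.aemeasurable hκ
  replace hη := ae_of_ae_map measurable_snd.aemeasurable hη
  have hcost : Integrable (fun z : E × E => ‖z.1 - z.2‖ ^ 2) π := by
    refine .of_bound (by fun_prop) (R ^ 2) ?_
    filter_upwards [hR] with z hz
    simpa using pow_le_pow_left₀ (norm_nonneg _) hz 2
  have hdrift : Integrable (fun z : E × E => 2 * R * (‖drift κ z.1‖ + ‖drift η z.2‖)) π :=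
    (hdriftκ.add hdriftη).const_mul _
  have hsum : Integrable (fun z : E × E =>
      ‖z.1 - z.2‖ ^ 2 + 2 * R * (‖drift κ z.1‖ + ‖drift η z.2‖)) π := hcost.add hdrift
  rw [integral_map measurable_fst.aemeasurable
      (stronglyMeasurable_drift κ).norm.aestronglyMeasurable,
    integral_map measurable_snd.aemeasurable (stronglyMeasurable_drift η).norm.aestronglyMeasurable]
  calc ∫ p, ‖p.1 - p.2‖ ^ 2 ∂((κ ∥ₖ η) ∘ₘ π)
    _ = ∫ z, ∫ p, ‖p.1 - p.2‖ ^ 2 ∂((κ z.1).prod (η z.2)) ∂π := by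
        simp_rw [integral_comp_measure (integrable_parallelComp_norm_sub_sq hκ hη hR),
          Kernel.parallelComp_apply]
    _ ≤ ∫ z, (‖z.1 - z.2‖ ^ 2 + 2 * R * (‖drift κ z.1‖ + ‖drift η z.2‖) + (r + r) ^ 2) ∂π := by
        refine integral_mono_of_nonneg (.of_forall fun z => integral_nonneg fun p => by positivity)
          (hsum.add (integrable_const _)) ?_
        filter_upwards [hκ, hη, hR] with z hz₁ hz₂ hz
        refine (integral_prod_norm_sub_sq_le hz₁ hz₂).trans ?_
        simp only [drift]
        gcongr
    _ = _ := by
        rw [integral_add hsum (integrable_const _), integral_add hcost hdrift, integral_const_mul,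
          integral_add hdriftκ hdriftη]
        simp

end Drift

section CondDistrib

variable {E : Type*} [NormedAddCommGroup E] [MeasurableSpace E] [BorelSpace E]
  [SecondCountableTopology E] [CompleteSpace E] {P : Measure E} [IsFiniteMeasure P] {G : E → E}

lemma ae_condDistrib_id_norm_sub_le (hG : Measurable G) {r : ℝ} (h : ∀ᵐ x ∂P, ‖x - G x‖ ≤ r) :
    ∀ᵐ u ∂P.map G, ∀ᵐ x ∂condDistrib id G P u, ‖x - u‖ ≤ r := by
  refine Measure.ae_ae_of_ae_compProd (p := fun z : E × E => ‖z.2 - z.1‖ ≤ r) ?_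
  rw [compProd_map_condDistrib aemeasurable_id]
  exact (ae_map_iff (by fun_prop) (measurableSet_le (by fun_prop) measurable_const)).2 h

variable [NormedSpace ℝ E]

lemma measureReal_smul_drift_condDistrib (hG : Measurable G)
    (hint : Integrable (fun x => x - G x) P) (u : E) :
    (P.map G).real {u} • drift (condDistrib id G P) u = ∫ x in G ⁻¹' {u}, (x - u) ∂P := by
  have hpair : AEMeasurable (fun x => (G x, id x)) P := by fun_prop
  have hint' : Integrable (fun z : E × E => z.2 - z.1) (P.map G ⊗ₘ condDistrib id G P) := by
    rw [compProd_map_condDistrib aemeasurable_id, integrable_map_measure (by fun_prop) hpair]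
    exact hint
  have hsing := measurableSet_singleton u
  calc (P.map G).real {u} • drift (condDistrib id G P) u
    _ = ∫ z in {u} ×ˢ univ, (z.2 - z.1) ∂(P.map G ⊗ₘ condDistrib id G P) := by
        rw [Measure.setIntegral_compProd hsing .univ hint'.integrableOn]
        simp [drift, measureReal_def]
    _ = ∫ x in G ⁻¹' {u}, (x - G x) ∂P := by
        rw [compProd_map_condDistrib aemeasurable_id,
          setIntegral_map (hsing.prod .univ) (by fun_prop) hpair, mk_preimage_prod, preimage_univ,
          inter_univ]
        rfl
    _ = ∫ x in G ⁻¹' {u}, (x - u) ∂P :=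
        setIntegral_congr_fun (hG hsing) fun x hx => by rw [show G x = u from hx]

lemma integral_norm_drift_condDistrib_le (hG : Measurable G) (hcount : (range G).Countable)
    (hint : Integrable (fun x => x - G x) P) {ν : Measure E} [IsFiniteMeasure ν] {δ : ℝ≥0}
    (h : ∀ u, ‖∫ x in G ⁻¹' {u}, (x - u) ∂P‖ ≤ δ * ν.real (G ⁻¹' {u})) :
    ∫ u, ‖drift (condDistrib id G P) u‖ ∂P.map G ≤ δ * ν.real univ := by
  have hrange (m : Measure E) : (m.map G).restrict (range G) = m.map G :=
    Measure.restrict_eq_self_of_ae_mem <|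
      (ae_map_iff hG.aemeasurable hcount.measurableSet).2 (.of_forall mem_range_self)
  have hatom (u : E) : ‖drift (condDistrib id G P) u‖ₑ * P.map G {u} ≤ δ * ν.map G {u} := by
    rw [← ENNReal.toReal_le_toReal (by finiteness) (by finiteness)]
    calc _ = ‖(P.map G).real {u} • drift (condDistrib id G P) u‖ := by
          simp [norm_smul, mul_comm, measureReal_def]
      _ ≤ δ * ν.real (G ⁻¹' {u}) := by
          rw [measureReal_smul_drift_condDistrib hG hint]
          exact h u
      _ = _ := by simp [Measure.map_apply hG (measurableSet_singleton u), measureReal_def]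
  have hle : ∫⁻ u, ‖drift (condDistrib id G P) u‖ₑ ∂P.map G ≤ δ * ν univ := by
    calc _ = ∑' u : range G, ‖drift (condDistrib id G P) u‖ₑ * P.map G {(u : E)} := by
          rw [← lintegral_countable (fun u => ‖drift (condDistrib id G P) u‖ₑ) hcount, hrange]
      _ ≤ ∑' u : range G, δ * ν.map G {(u : E)} := ENNReal.tsum_le_tsum fun u => hatom u
      _ = δ * ν univ := by
          rw [← lintegral_countable (fun _ => δ) hcount, hrange, lintegral_const,
            Measure.map_apply hG .univ, preimage_univ]
  rw [integral_norm_eq_lintegral_enorm (stronglyMeasurable_drift _).aestronglyMeasurable]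
  refine (ENNReal.toReal_mono (by finiteness) hle).trans_eq ?_
  simp [measureReal_def]

end CondDistrib

lemma W2sq_le_W2sq_map_add {d : ℕ} {P Q : Measure (Euc d)} [IsProbabilityMeasure P]
    [IsProbabilityMeasure Q] {G : Euc d → Euc d} (hG : Measurable G) {r R : ℝ}
    (hP : ∀ᵐ x ∂P, ‖x - G x‖ ≤ r) (hQ : ∀ᵐ y ∂Q, ‖y - G y‖ ≤ r) {s : Set (Euc d)}
    (hs : MeasurableSet s) (hPs : ∀ᵐ x ∂P, G x ∈ s) (hQs : ∀ᵐ y ∂Q, G y ∈ s)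
    (hR : ∀ u ∈ s, ∀ v ∈ s, ‖u - v‖ ≤ R) :
    W2sq P Q ≤ W2sq (P.map G) (Q.map G) +
      (2 * R * (∫ u, ‖drift (condDistrib id G P) u‖ ∂P.map G +
        ∫ v, ‖drift (condDistrib id G Q) v‖ ∂Q.map G) + (r + r) ^ 2) := by
  have := Measure.isProbabilityMeasure_map (μ := P) hG.aemeasurable
  have := Measure.isProbabilityMeasure_map (μ := Q) hG.aemeasurable
  rw [← sub_le_iff_le_add]
  refine le_W2sq fun π hπ => ?_
  have hlift := parallelComp_comp_mem_couplings (condDistrib id G P) (condDistrib id G Q) hπ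
  simp only [condDistrib_comp_map hG.aemeasurable aemeasurable_id, Measure.map_id] at hlift
  obtain ⟨_, hfst, hsnd⟩ := hπ
  have hRπ : ∀ᵐ z ∂π, ‖z.1 - z.2‖ ≤ R := by
    filter_upwards [ae_of_ae_map measurable_fst.aemeasurable
        (hfst ▸ (ae_map_iff hG.aemeasurable hs).2 hPs),
      ae_of_ae_map measurable_snd.aemeasurable
        (hsnd ▸ (ae_map_iff hG.aemeasurable hs).2 hQs)] with z hz₁ hz₂
    exact hR _ hz₁ _ hz₂
  have hcost := integral_parallelComp_norm_sub_sq_le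
    (hfst ▸ ae_condDistrib_id_norm_sub_le hG hP) (hsnd ▸ ae_condDistrib_id_norm_sub_le hG hQ) hRπ
  rw [hfst, hsnd] at hcost
  linarith [W2sq_le_integral hlift]

section Density

variable {E : Type*} [NormedAddCommGroup E] [NormedSpace ℝ E] [MeasurableSpace E] [BorelSpace E]
  {ν : Measure E} {s : Set E} {c : E}

lemma setIntegral_sub_center_eq_zero [ν.IsAddLeftInvariant] [ν.IsNegInvariant]
    (hs : MeasurableSet s) (hsymm : ∀ x, c + c - x ∈ s ↔ x ∈ s) : ∫ x in s, (x - c) ∂ν = 0 := by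
  have hodd (x : E) :
      s.indicator (· - c) (c + c - x) = -s.indicator (· - c) x := by
    by_cases hx : x ∈ s
    · rw [indicator_of_mem hx, indicator_of_mem ((hsymm x).2 hx)]
      abel
    · rw [indicator_of_notMem hx, indicator_of_notMem (mt (hsymm x).1 hx), neg_zero]
  have hreflect := integral_sub_left_eq_self (s.indicator (· - c)) ν (c + c)
  simp_rw [hodd, integral_neg] at hreflect
  rw [← integral_indicator hs]
  have : IsAddTorsionFree E := .of_isTorsionFree ℝ E
  exact self_eq_neg.1 hreflect.symm

lemma norm_setIntegral_withDensity_sub_center_le [SecondCountableTopology E]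
    [ν.IsAddLeftInvariant] [ν.IsNegInvariant] {f : E → ℝ≥0} {C α : ℝ≥0} {r : ℝ} (hα : 0 < α)
    (hs : MeasurableSet s) (hνs : ν s ≠ ∞)
    (hsymm : ∀ x, c + c - x ∈ s ↔ x ∈ s) (hc : c ∈ s) (hr : ∀ x ∈ s, ‖x - c‖ ≤ r)
    (hf : HolderOnWith C α f s) :
    ‖∫ x in s, (x - c) ∂ν.withDensity (fun x => f x)‖ ≤ C * r ^ (α : ℝ) * r * ν.real s := by
  have hbound : ∀ x ∈ s, ‖((f x : ℝ) - f c) • (x - c)‖ ≤ C * r ^ (α : ℝ) * r := fun x hx => by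
    have hfx : |(f x : ℝ) - f c| ≤ C * r ^ (α : ℝ) :=
      hf.dist_le_of_le hx hc (by simpa [dist_eq_norm] using hr x hx)
    rw [norm_smul]
    exact mul_le_mul hfx (hr x hx) (norm_nonneg _) ((abs_nonneg _).trans hfx)
  have hcont : ContinuousOn (fun x => (f x : ℝ)) s :=
    NNReal.continuous_coe.comp_continuousOn (hf.continuousOn hα)
  have hdev : IntegrableOn (fun x => ((f x : ℝ) - f c) • (x - c)) s ν :=
    .of_bound hνs.lt_top (ContinuousOn.aestronglyMeasurable (by fun_prop) hs) _
      (ae_restrict_of_forall_mem hs hbound)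
  have hconst : IntegrableOn (fun x => (f c : ℝ) • (x - c)) s ν :=
    .of_bound hνs.lt_top (by fun_prop) (f c * r) <| ae_restrict_of_forall_mem hs fun x hx => by
      simpa [norm_smul] using mul_le_mul_of_nonneg_left (hr x hx) (f c).2
  -- By symmetry of `s`, the density may be replaced by `f - f c`, which is small on `s`.
  have hsub : ∫ x in s, (x - c) ∂ν.withDensity (fun x => f x) =
      ∫ x in s, ((f x : ℝ) - f c) • (x - c) ∂ν := by
    calc _ = ∫ x in s, f x • (x - c) ∂ν :=
          setIntegral_withDensity_eq_setIntegral_smul₀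
            ((hf.continuousOn hα).aemeasurable hs) _ hs
      _ = ∫ x in s, (((f x : ℝ) - f c) • (x - c) + (f c : ℝ) • (x - c)) ∂ν := by
          simp [NNReal.smul_def, ← add_smul]
      _ = _ := by
          rw [integral_add hdev hconst, integral_smul, setIntegral_sub_center_eq_zero hs hsymm,
            smul_zero, add_zero]
  rw [hsub]
  exact norm_setIntegral_le_of_norm_le_const hνs.lt_top hbound

end Density

section Grid

variable {d : ℕ} {h : ℝ} {x y : Euc d}

lemma norm_le_sqrt_mul_of_abs_le {r : ℝ} (hr : 0 ≤ r) (hx : ∀ i, |x i| ≤ r) : ‖x‖ ≤ √d * r := by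
  rw [EuclideanSpace.norm_eq, ← Real.sqrt_sq hr, ← Real.sqrt_mul (Nat.cast_nonneg d)]
  refine Real.sqrt_le_sqrt ?_
  calc ∑ i, ‖x i‖ ^ 2 ≤ ∑ _i : Fin d, r ^ 2 :=
        Finset.sum_le_sum fun i _ => pow_le_pow_left₀ (norm_nonneg _) (hx i) 2
    _ = d * r ^ 2 := by simp

lemma measurableSet_unitCube (d : ℕ) : MeasurableSet (unitCube d) :=
  measurableSet_setOfPred.2 <| .forall fun i => measurableSet_setOfPred.1 <|
    measurableSet_Ioo.preimage (by fun_prop)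

lemma volume_unitCube (d : ℕ) : volume (unitCube d) = 1 := by
  have hpi : unitCube d = WithLp.ofLp ⁻¹' univ.pi fun _ => Ioo (0 : ℝ) 1 := by
    ext x
    simp [unitCube]
  rw [hpi, (PiLp.volume_preserving_ofLp (Fin d)).measure_preimage
    (MeasurableSet.univ_pi fun _ => measurableSet_Ioo).nullMeasurableSet, volume_pi_pi]
  simp

lemma norm_sub_le_of_mem_unitCube (hx : x ∈ unitCube d) (hy : y ∈ unitCube d) :
    ‖x - y‖ ≤ √d := by
  have hxy : ∀ i, |(x - y) i| ≤ 1 := fun i => by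
    rw [PiLp.sub_apply, abs_le]
    constructor <;> linarith [(hx i).1, (hx i).2, (hy i).1, (hy i).2]
  simpa using norm_le_sqrt_mul_of_abs_le zero_le_one hxy

/-- The open axis-aligned cube with center `c` and side length `h`. -/
def openCell (c : Euc d) (h : ℝ) : Set (Euc d) := {x | ∀ i, |x i - c i| < h / 2}

lemma measurableSet_openCell (c : Euc d) (h : ℝ) : MeasurableSet (openCell c h) :=
  measurableSet_setOfPred.2 <| .forall fun i => measurableSet_setOfPred.1 <|
    measurableSet_lt (by fun_prop) measurable_const

lemma reflect_mem_openCell_iff (c x : Euc d) : c + c - x ∈ openCell c h ↔ x ∈ openCell c h :=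
  forall_congr' fun i => by
    rw [← abs_neg]
    congr! 2
    simp only [PiLp.sub_apply, PiLp.add_apply]
    ring

lemma norm_sub_le_of_mem_openCell {c : Euc d} (hh : 0 ≤ h) (hx : x ∈ openCell c h) :
    ‖x - c‖ ≤ √d * (h / 2) :=
  norm_le_sqrt_mul_of_abs_le (by positivity) fun i => (hx i).le

lemma Ico_cell_ae_eq_openCell (c : Euc d) (h : ℝ) :
    {x : Euc d | ∀ i, x i ∈ Ico (c i - h / 2) (c i + h / 2)} =ᵐ[volume] openCell c h := by
  have hIco : {x : Euc d | ∀ i, x i ∈ Ico (c i - h / 2) (c i + h / 2)} =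
      WithLp.ofLp ⁻¹' univ.pi fun i => Ico (c i - h / 2) (c i + h / 2) := by
    ext x
    simp
  have hIoo : openCell c h = WithLp.ofLp ⁻¹' univ.pi fun i => Ioo (c i - h / 2) (c i + h / 2) := by
    ext x
    simp [openCell, abs_sub_lt_iff, sub_lt_iff_lt_add, and_comm, add_comm]
  rw [hIco, hIoo]
  exact (PiLp.volume_preserving_ofLp (Fin d)).quasiMeasurePreserving.preimage_ae_eq
    (Measure.univ_pi_Ico_ae_eq_Icc.trans Measure.univ_pi_Ioo_ae_eq_Icc.symm)

lemma gridSnap_apply (d : ℕ) (h : ℝ) (x : Euc d) (i : Fin d) :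
    gridSnap d h x i = h * ⌊x i / h⌋ + h / 2 := rfl

lemma measurable_gridSnap (d : ℕ) (h : ℝ) : Measurable (gridSnap d h) := by
  have hcast : Measurable fun n : ℤ => (n : ℝ) := measurable_from_top
  refine (EuclideanSpace.equiv (Fin d) ℝ).symm.continuous.measurable.comp
    (measurable_pi_lambda _ fun i => ?_)
  exact ((hcast.comp (Int.measurable_floor.comp (by fun_prop))).const_mul h).add_const _

lemma countable_range_gridSnap (d : ℕ) (h : ℝ) : (range (gridSnap d h)).Countable :=
  (countable_range fun n : Fin d → ℤ =>
    (EuclideanSpace.equiv (Fin d) ℝ).symm fun i => h * n i + h / 2).mono <|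
      range_subset_iff.2 fun x => mem_range.2 ⟨fun i => ⌊x i / h⌋, rfl⟩

lemma gridSnap_eq_gridSnap_iff (hh : 0 < h) : gridSnap d h x = gridSnap d h y ↔
    ∀ i, x i ∈ Ico (gridSnap d h y i - h / 2) (gridSnap d h y i + h / 2) := by
  have hext : gridSnap d h x = gridSnap d h y ↔ ∀ i, gridSnap d h x i = gridSnap d h y i :=
    PiLp.ext_iff
  refine hext.trans (forall_congr' fun i => ?_)
  have hfloor : gridSnap d h x i = gridSnap d h y i ↔ ⌊x i / h⌋ = ⌊y i / h⌋ := by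
    simp [gridSnap_apply, hh.ne']
  rw [hfloor, Int.floor_eq_iff, le_div_iff₀ hh, div_lt_iff₀ hh, gridSnap_apply, mem_Ico]
  ring_nf

lemma gridSnap_preimage_ae_eq_openCell (hh : 0 < h) (y : Euc d) :
    gridSnap d h ⁻¹' {gridSnap d h y} =ᵐ[volume] openCell (gridSnap d h y) h := by
  refine (Eq.eventuallyEq ?_).trans (Ico_cell_ae_eq_openCell _ h)
  ext x
  exact gridSnap_eq_gridSnap_iff hh

lemma norm_sub_gridSnap_le (hh : 0 < h) (x : Euc d) : ‖x - gridSnap d h x‖ ≤ √d * (h / 2) := by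
  refine norm_le_sqrt_mul_of_abs_le (by positivity) fun i => ?_
  have hi := (gridSnap_eq_gridSnap_iff hh).1 (rfl : gridSnap d h x = _) i
  rw [PiLp.sub_apply, abs_le]
  constructor <;> linarith [hi.1, hi.2]

lemma gridSnap_mem_openCell (hh : 0 < h) (x : Euc d) :
    gridSnap d h x ∈ openCell (gridSnap d h x) h := fun i => by simpa using hh

lemma openCell_gridSnap_subset_unitCube {L : ℕ} (hL : 0 < L) (hx : x ∈ unitCube d) :
    openCell (gridSnap d (1 / L) x) (1 / L) ⊆ unitCube d := fun y hy i => by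
  have hL' : (0 : ℝ) < L := Nat.cast_pos.2 hL
  obtain ⟨hx₀, hx₁⟩ := hx i
  have hfloor₀ : (0 : ℝ) ≤ ⌊x i * L⌋ := by exact_mod_cast Int.floor_nonneg.2 (by positivity)
  have hfloor₁ : (⌊x i * L⌋ : ℝ) + 1 ≤ L := by
    have : ⌊x i * L⌋ < (L : ℤ) := Int.floor_lt.2 (by push_cast; nlinarith)
    exact_mod_cast this
  have hyi := hy i
  rw [gridSnap_apply, div_div_eq_mul_div, div_one, abs_lt] at hyi
  have h₀ : 0 ≤ 1 / (L : ℝ) * ⌊x i * L⌋ := mul_nonneg (by positivity) hfloor₀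
  have h₁ : 1 / (L : ℝ) * ⌊x i * L⌋ + 1 / L ≤ 1 := by
    rw [← mul_add_one, one_div_mul_eq_div]
    exact (div_le_one hL').2 hfloor₁
  exact ⟨by linarith, by linarith⟩

end Grid

section HolderDensity

instance isProbabilityMeasure_restrict_unitCube (d : ℕ) :
    IsProbabilityMeasure (volume.restrict (unitCube d)) := ⟨by simp [volume_unitCube]⟩

variable {d : ℕ}

/-- `P` has a density on the unit cube which is Hölder continuous there with exponent `α` and
constant `C`. The values of `f` outside the cube are irrelevant. -/
def HasHolderDensity (C α : ℝ≥0) (P : Measure (Euc d)) : Prop :=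
  ∃ f : Euc d → ℝ≥0, HolderOnWith C α f (unitCube d) ∧
    P = (volume.restrict (unitCube d)).withDensity fun x => f x

lemma holderOnWith_toNNReal_of_abs_sub_le {E : Type*} [NormedAddCommGroup E] {f : E → ℝ}
    {s : Set E} {C α : ℝ≥0} (hf : ∀ x ∈ s, ∀ y ∈ s, |f x - f y| ≤ C * ‖x - y‖ ^ (α : ℝ)) :
    HolderOnWith C α (fun x => (f x).toNNReal) s := fun x hx y hy => by
  rw [edist_nndist, edist_nndist, ← ENNReal.coe_rpow_of_nonneg _ α.coe_nonneg, ← ENNReal.coe_mul,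
    ENNReal.coe_le_coe, ← NNReal.coe_le_coe]
  push_cast
  rw [dist_eq_norm x y]
  exact (abs_max_sub_max_le_abs _ _ _).trans (hf x hx y hy)

lemma IsControlled.exists_hasHolderDensity {α : ℝ≥0} {C : ℝ} {P Q : Measure (Euc d)}
    (h : IsControlled d α C P Q) : ∃ Cμ Cν : ℝ≥0, (Cμ + Cν : ℝ) ≤ C ∧
      HasHolderDensity Cμ α P ∧ HasHolderDensity Cν α Q := by
  obtain ⟨μ, ν, hP, hQ, ⟨Cμ, Cν, hCμ, hCν, hC, hμ, hν⟩, -, -⟩ := h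
  lift Cμ to ℝ≥0 using hCμ
  lift Cν to ℝ≥0 using hCν
  exact ⟨Cμ, Cν, hC, ⟨_, holderOnWith_toNNReal_of_abs_sub_le hμ, hP⟩,
    ⟨_, holderOnWith_toNNReal_of_abs_sub_le hν, hQ⟩⟩

variable {C α : ℝ≥0} {P : Measure (Euc d)} {L : ℕ}

lemma HasHolderDensity.absolutelyContinuous (hP : HasHolderDensity C α P) :
    P ≪ volume.restrict (unitCube d) := by
  obtain ⟨f, -, rfl⟩ := hP
  exact withDensity_absolutelyContinuous _ _

lemma HasHolderDensity.norm_setIntegral_gridSnap_preimage_le (hα : 0 < α)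
    (hP : HasHolderDensity C α P) (hL : 0 < L) (u : Euc d) :
    ‖∫ x in gridSnap d (1 / L) ⁻¹' {u}, (x - u) ∂P‖ ≤
      C * (√d / 2 * (1 / L)) ^ (1 + α : ℝ) *
        (volume.restrict (unitCube d)).real (gridSnap d (1 / L) ⁻¹' {u}) := by
  have hh : (0 : ℝ) < 1 / L := by positivity
  have hcube := measurableSet_unitCube d
  by_cases hu : ∃ y ∈ unitCube d, gridSnap d (1 / L) y = u
  swap
  · have hempty : gridSnap d (1 / L) ⁻¹' {u} ∩ unitCube d = ∅ :=
      eq_empty_of_forall_notMem fun y hy => hu ⟨y, hy.2, hy.1⟩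
    have hnull : (volume.restrict (unitCube d)) (gridSnap d (1 / L) ⁻¹' {u}) = 0 := by
      rw [Measure.restrict_apply₀' hcube.nullMeasurableSet, hempty, measure_empty]
    rw [setIntegral_measure_zero _ (hP.absolutelyContinuous hnull), norm_zero]
    positivity
  obtain ⟨y, hy, rfl⟩ := hu
  set c := gridSnap d (1 / L) y
  have hsub : openCell c (1 / L) ⊆ unitCube d := openCell_gridSnap_subset_unitCube hL hy
  have hcell : gridSnap d (1 / L) ⁻¹' {c} =ᵐ[volume.restrict (unitCube d)] openCell c (1 / L) :=
    ae_restrict_of_ae (gridSnap_preimage_ae_eq_openCell hh y)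
  rw [setIntegral_congr_set (hP.absolutelyContinuous.ae_eq hcell), measureReal_congr hcell,
    measureReal_restrict_apply (measurableSet_openCell _ _), inter_eq_left.2 hsub]
  obtain ⟨f, hf, rfl⟩ := hP
  rw [← restrict_withDensity hcube, Measure.restrict_restrict_of_subset hsub]
  have hfin : volume (openCell c (1 / L)) ≠ ∞ :=
    measure_ne_top_of_subset hsub (by simp [volume_unitCube])
  refine (norm_setIntegral_withDensity_sub_center_le hα (measurableSet_openCell _ _) hfin
    (reflect_mem_openCell_iff c) (gridSnap_mem_openCell hh y)
    (fun x hx => norm_sub_le_of_mem_openCell hh.le hx) (hf.mono hsub)).trans_eq ?_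
  rw [Real.rpow_add_of_nonneg (by positivity) zero_le_one α.coe_nonneg, Real.rpow_one]
  ring_nf

lemma HasHolderDensity.integral_norm_drift_gridSnap_le [IsFiniteMeasure P] (hα : 0 < α)
    (hP : HasHolderDensity C α P) (hL : 0 < L) :
    ∫ u, ‖drift (condDistrib id (gridSnap d (1 / L)) P) u‖ ∂P.map (gridSnap d (1 / L)) ≤
      C * (√d / 2 * (1 / L)) ^ (1 + α : ℝ) := by
  have hG := measurable_gridSnap d (1 / L)
  have hint : Integrable (fun x => x - gridSnap d (1 / L) x) P :=
    .of_bound (by fun_prop) _ (.of_forall (norm_sub_gridSnap_le (by positivity)))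
  have hle := integral_norm_drift_condDistrib_le hG (countable_range_gridSnap _ _) hint
    (ν := volume.restrict (unitCube d)) (δ := C * (.sqrt d / 2 * (1 / L)) ^ (1 + α : ℝ))
    fun u => by simpa using hP.norm_setIntegral_gridSnap_preimage_le hα hL u
  simpa using hle

lemma HasHolderDensity.ae_gridSnap_mem_unitCube (hP : HasHolderDensity C α P) (hL : 0 < L) :
    ∀ᵐ x ∂P, gridSnap d (1 / L) x ∈ unitCube d :=
  hP.absolutelyContinuous.ae_le <| ae_restrict_of_forall_mem (measurableSet_unitCube d)
    fun x hx => openCell_gridSnap_subset_unitCube hL hx (gridSnap_mem_openCell (by positivity) x)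

end HolderDensity

theorem grid_discretization_lower_general {d : ℕ} {α Cμ Cν : ℝ≥0} (hα0 : 0 < α) (hα1 : α ≤ 1)
    {P Q : Measure (Euc d)} [IsProbabilityMeasure P] [IsProbabilityMeasure Q]
    (hP : HasHolderDensity Cμ α P) (hQ : HasHolderDensity Cν α Q) {L : ℕ} (hL : 0 < L) :
    W2sq P Q ≤ W2sq (P.map (gridSnap d (1 / L))) (Q.map (gridSnap d (1 / L))) +
      (2 * √d * ((Cμ + Cν) * (√d / 2) ^ (1 + α : ℝ)) + d) * (1 / L) ^ (1 + α : ℝ) := by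
  have hh : (0 : ℝ) < 1 / L := by positivity
  have hh1 : 1 / (L : ℝ) ≤ 1 := by
    rw [div_le_one (by positivity)]
    exact_mod_cast hL
  have hdriftP := hP.integral_norm_drift_gridSnap_le hα0 hL
  have hdriftQ := hQ.integral_norm_drift_gridSnap_le hα0 hL
  refine (W2sq_le_W2sq_map_add (measurable_gridSnap d (1 / L))
    (.of_forall (norm_sub_gridSnap_le hh)) (.of_forall (norm_sub_gridSnap_le hh))
    (measurableSet_unitCube d) (hP.ae_gridSnap_mem_unitCube hL) (hQ.ae_gridSnap_mem_unitCube hL)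
    fun u hu v hv => norm_sub_le_of_mem_unitCube hu hv).trans ?_
  have hquad : (√d * (1 / L / 2) + √d * (1 / L / 2)) ^ 2 ≤ d * (1 / L) ^ (1 + α : ℝ) := by
    calc (√d * (1 / L / 2) + √d * (1 / L / 2)) ^ 2
      _ = √d ^ 2 * (1 / L) ^ (2 : ℝ) := by
          rw [Real.rpow_two]
          ring
      _ ≤ d * (1 / L) ^ (1 + α : ℝ) := by
          rw [Real.sq_sqrt d.cast_nonneg]
          gcongr ?_ * ?_
          exact Real.rpow_le_rpow_of_exponent_ge hh hh1 (by linarith [NNReal.coe_le_one.2 hα1])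
  gcongr _ + ?_
  calc _ ≤ 2 * √d * (Cμ * (√d / 2 * (1 / L)) ^ (1 + α : ℝ) +
          Cν * (√d / 2 * (1 / L)) ^ (1 + α : ℝ)) + d * (1 / L) ^ (1 + α : ℝ) := by gcongr
    _ = _ := by
        rw [Real.mul_rpow (by positivity) hh.le]
        ring

/-- Discretization error lower bound:
`W₂²(P,Q) ≤ W₂²(G_h#P, G_h#Q) + K h^{1+α}`. -/
theorem grid_discretization_lower (d : ℕ) (hd : 1 ≤ d) (α C : ℝ)
    (hα0 : 0 < α) (hα1 : α < 1) (hC : 1 < C) :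
    ∃ K > (0 : ℝ), ∀ P Q : Measure (Euc d),
      IsProbabilityMeasure P → IsProbabilityMeasure Q →
      IsControlled d α C P Q →
      ∀ h : ℝ, 0 < h → (∃ L : ℕ, 0 < L ∧ h = 1 / L) →
        W2sq P Q
          ≤ W2sq (P.map (gridSnap d h)) (Q.map (gridSnap d h)) + K * h ^ (1 + α) := by
  lift α to ℝ≥0 using hα0.le
  refine ⟨2 * √d * (C * (√d / 2) ^ (1 + α : ℝ)) + d, by positivity, ?_⟩
  rintro P Q _ _ hPQ _ - ⟨L, hL, rfl⟩
  obtain ⟨Cμ, Cν, hC', hP, hQ⟩ := hPQ.exists_hasHolderDensity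
  refine (grid_discretization_lower_general (by exact_mod_cast hα0) (by exact_mod_cast hα1.le)
    hP hQ hL).trans ?_
  gcongr
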